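/- Equip Λ²ℤ⁴ with the symmetric bilinear form b(x,y) := x ∧ y ∈ Λ⁴ℤ⁴ ≅ ℤ. Let h ∈ Λ²ℤ⁴ be primitive with b(h,h) = 2d > 0, and let F_h be the nondegenerate alternating form on ℤ⁴ given by F_h(β₁,β₂) = h ∧ β₁ ∧ β₂ ∈ Λ⁴ℤ⁴ ≅ ℤ. Then the image under the second exterior power homomorphism λ(ψ) = Λ²ψ of the symplectic group Sp(ℤ⁴, F_h) = {ψ ∈ GL₄(ℤ) : F_h(ψβ₁,ψβ₂) = F_h(β₁,β₂) for all β₁,β₂} equals the stabilizer SO^+_h(Λ²ℤ⁴, b) = {φ ∈ SO^+(Λ²ℤ⁴, b) : φ(h) = h}. -/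

import Mathlib

open Matrix

/-- The ℝ-bilinear extension of the integral bilinear form with Gram matrix `M`. -/
def bilinR {ι : Type*} [Fintype ι] (M : Matrix ι ι ℤ) (x y : ι → ℝ) : ℝ :=
  x ⬝ᵥ ((M.map (Int.cast : ℤ → ℝ)) *ᵥ y)

/-- `w` is a tuple of vectors of `L ⊗ ℝ` spanning a maximal positive definite subspace:
its Gram matrix is positive definite and no longer tuple has positive definite Gram matrix. -/
def IsMaxPosTuple {ι : Type*} [Fintype ι] (M : Matrix ι ι ℤ) {k : ℕ}
    (w : Fin k → ι → ℝ) : Prop :=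
  (Matrix.of fun i j => bilinR M (w i) (w j)).PosDef ∧
    ∀ w' : Fin (k + 1) → ι → ℝ,
      ¬ (Matrix.of fun i j => bilinR M (w' i) (w' j)).PosDef

/-- `g` preserves the orientation of the positive cone of the lattice with Gram matrix `M`:
for every basis `w` of a maximal positive definite subspace `W` of `L ⊗ ℝ`, the determinant of
the matrix `(B(wᵢ, g wⱼ))` (which equals, up to the positive factor `det (Gram w)`, the
determinant of the orthogonal projection of `g|_W` back to `W`) is positive. -/
def OrientPres {ι : Type*} [Fintype ι] (M : Matrix ι ι ℤ) (g : Matrix ι ι ℤ) : Prop :=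
  ∀ (k : ℕ) (w : Fin k → ι → ℝ), IsMaxPosTuple M w →
    0 < (Matrix.of fun i j : Fin k =>
          bilinR M (w i) ((g.map (Int.cast : ℤ → ℝ)) *ᵥ w j)).det

/-- `g` is an isometry of the lattice with Gram matrix `M`. -/
def IsIsometry {ι : Type*} [Fintype ι] (M : Matrix ι ι ℤ) (g : Matrix ι ι ℤ) : Prop :=
  gᵀ * M * g = M

/-- A vector of a lattice is primitive if it is divisible only by units. -/
def IsPrimitiveVec {ι : Type*} (l : ι → ℤ) : Prop :=
  ∀ (c : ℤ) (x : ι → ℤ), l = c • x → IsUnit c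

/-- First members of the six index pairs `(0,1),(0,2),(0,3),(1,2),(1,3),(2,3)` indexing the
standard basis `eᵢ ∧ eⱼ` (i < j) of `Λ²ℤ⁴`. -/
def pfst : Fin 6 → Fin 4 := ![0, 0, 0, 1, 1, 2]

/-- Second members of the six index pairs indexing the standard basis of `Λ²ℤ⁴`. -/
def psnd : Fin 6 → Fin 4 := ![1, 2, 3, 2, 3, 3]

/-- The second exterior power `Λ²ψ` of a `4×4` integral matrix, in the standard basis
`eᵢ ∧ eⱼ` (i < j) of `Λ²ℤ⁴`: its entries are the `2×2` minors of `ψ`. -/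
def lam2 (ψ : Matrix (Fin 4) (Fin 4) ℤ) : Matrix (Fin 6) (Fin 6) ℤ :=
  Matrix.of fun I J =>
    ψ (pfst I) (pfst J) * ψ (psnd I) (psnd J) - ψ (pfst I) (psnd J) * ψ (psnd I) (pfst J)

/-- The Gram matrix of the symmetric bilinear form `b(x,y) = x ∧ y ∈ Λ⁴ℤ⁴ ≅ ℤ` on `Λ²ℤ⁴`,
in the standard basis `eᵢ ∧ eⱼ` (i < j), where `Λ⁴ℤ⁴` is identified with `ℤ` via the
generator `e₀ ∧ e₁ ∧ e₂ ∧ e₃`. -/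
def G6 : Matrix (Fin 6) (Fin 6) ℤ :=
  !![0,0,0,0,0,1;
     0,0,0,0,-1,0;
     0,0,0,1,0,0;
     0,0,1,0,0,0;
     0,-1,0,0,0,0;
     1,0,0,0,0,0]

/-- The wedge product `β ∧ γ ∈ Λ²ℤ⁴` of two vectors of `ℤ⁴`, in the standard basis
`eᵢ ∧ eⱼ` (i < j) of `Λ²ℤ⁴`. -/
def wedge (β γ : Fin 4 → ℤ) : Fin 6 → ℤ :=
  ![β 0 * γ 1 - β 1 * γ 0,
    β 0 * γ 2 - β 2 * γ 0,
    β 0 * γ 3 - β 3 * γ 0,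
    β 1 * γ 2 - β 2 * γ 1,
    β 1 * γ 3 - β 3 * γ 1,
    β 2 * γ 3 - β 3 * γ 2]

/-- The alternating form `F_h(β₁,β₂) = h ∧ β₁ ∧ β₂ ∈ Λ⁴ℤ⁴ ≅ ℤ` on `ℤ⁴`
associated with `h ∈ Λ²ℤ⁴`. -/
def Fh (h : Fin 6 → ℤ) (β γ : Fin 4 → ℤ) : ℤ := h ⬝ᵥ (G6 *ᵥ wedge β γ)


set_option linter.unusedSimpArgs false

def lam2G {R : Type*} [CommRing R] (ψ : Matrix (Fin 4) (Fin 4) R) : Matrix (Fin 6) (Fin 6) R :=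
  Matrix.of fun I J =>
    ψ (pfst I) (pfst J) * ψ (psnd I) (psnd J) - ψ (pfst I) (psnd J) * ψ (psnd I) (pfst J)

def G6G (R : Type*) [CommRing R] : Matrix (Fin 6) (Fin 6) R :=
  !![0,0,0,0,0,1;
     0,0,0,0,-1,0;
     0,0,0,1,0,0;
     0,0,1,0,0,0;
     0,-1,0,0,0,0;
     1,0,0,0,0,0]

lemma lam2_eq (ψ) : lam2 ψ = lam2G ψ := rfl
lemma G6_eq : G6 = G6G ℤ := rfl
lemma G6_map : G6.map (Int.cast : ℤ → ℝ) = G6G ℝ := by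
  ext i j; fin_cases i <;> fin_cases j <;> simp [G6, G6G]
lemma lam2_map (ψ : Matrix (Fin 4) (Fin 4) ℤ) :
    (lam2 ψ).map (Int.cast : ℤ → ℝ) = lam2G (ψ.map (Int.cast : ℤ → ℝ)) := by
  ext i j; simp [lam2, lam2G]

lemma lam2G_mul {R : Type*} [CommRing R] (A B : Matrix (Fin 4) (Fin 4) R) :
    lam2G (A * B) = lam2G A * lam2G B := by
  ext I J
  simp only [lam2G, Matrix.mul_apply, Matrix.of_apply, Fin.sum_univ_four, Fin.sum_univ_six]
  generalize pfst J = x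
  generalize psnd J = y
  generalize pfst I = z
  generalize psnd I = w
  simp [pfst, psnd]
  ring

lemma lam2G_one {R : Type*} [CommRing R] : lam2G (1 : Matrix (Fin 4) (Fin 4) R) = 1 := by
  ext I J
  fin_cases I <;> fin_cases J <;> simp [lam2G, pfst, psnd, Matrix.one_apply]

set_option maxHeartbeats 1000000 in
lemma lam2G_isom {R : Type*} [CommRing R] (A : Matrix (Fin 4) (Fin 4) R) :
    (lam2G A)ᵀ * G6G R * lam2G A = A.det • G6G R := by
  have h (I J) : ((lam2G A)ᵀ * G6G R * lam2G A) I J =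
     (lam2G A) 5 I * lam2G A 0 J - lam2G A 4 I * lam2G A 1 J + lam2G A 3 I * lam2G A 2 J
     + lam2G A 2 I * lam2G A 3 J - lam2G A 1 I * lam2G A 4 J + lam2G A 0 I * lam2G A 5 J := by
    simp only [Matrix.mul_apply, Fin.sum_univ_six, Matrix.transpose_apply]
    simp [G6G]
    ring
  ext I J
  rw [h]
  rw [Matrix.det_succ_row_zero]
  simp only [Fin.sum_univ_four, Matrix.det_fin_three]
  fin_cases I <;> fin_cases J <;> simp [lam2G, pfst, psnd, G6G, Fin.succAbove, Fin.lt_def] <;> ring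

lemma wedge_mulVec (ψ : Matrix (Fin 4) (Fin 4) ℤ) (β γ : Fin 4 → ℤ) :
    wedge (ψ *ᵥ β) (ψ *ᵥ γ) = lam2 ψ *ᵥ wedge β γ := by
  ext I
  fin_cases I <;> simp [wedge, lam2, pfst, psnd, Matrix.mulVec, dotProduct, Fin.sum_univ_four, Fin.sum_univ_six] <;> ring

lemma G6G_sq {R : Type*} [CommRing R] : G6G R * G6G R = 1 := by
  ext i j; fin_cases i <;> fin_cases j <;> simp [G6G, Matrix.mul_apply, Fin.sum_univ_six]

lemma G6G_tr {R : Type*} [CommRing R] : (G6G R)ᵀ = G6G R := by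
  ext i j; fin_cases i <;> fin_cases j <;> simp [G6G]

open Matrix.SpecialLinearGroup in
lemma diag2n_dec (i j : Fin 4) (hij : i ≠ j) (c : ℝ) (hc : c ≠ 0) :
    diag2n hij c hc = Matrix.SpecialLinearGroup.transvection hij c *
      Matrix.SpecialLinearGroup.transvection hij.symm (- c⁻¹) *
      Matrix.SpecialLinearGroup.transvection hij c *
      Matrix.SpecialLinearGroup.transvection hij (-1) *
      Matrix.SpecialLinearGroup.transvection hij.symm 1 *
      Matrix.SpecialLinearGroup.transvection hij (-1) := by
  apply Subtype.ext
  simp only [diag2n_coe, coe_mul, transvection_coe, Matrix.transvection]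
  have h1 := hij.symm
  simp only [mul_add, add_mul, Matrix.single_mul_single_same, Matrix.mul_one, Matrix.one_mul, ne_eq, hij, h1, not_false_eq_true,
    Matrix.single_mul_single_of_ne, zero_mul, add_zero, mul_zero, zero_add]
  ext a b
  simp only [Matrix.add_apply, Matrix.single_apply, Matrix.one_apply, Matrix.diagonal_apply]
  by_cases ha : a = i <;> by_cases hb : b = i <;> by_cases ha' : a = j <;> by_cases hb' : b = j <;>
    simp_all [eq_comm] 

open Matrix.SpecialLinearGroup in
lemma sl_joined (A : Matrix.SpecialLinearGroup (Fin 4) ℝ) : Joined 1 A := by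
  have hm : ∀ A B : Matrix.SpecialLinearGroup (Fin 4) ℝ, Joined 1 A → Joined 1 B → Joined 1 (A * B) := by
    intro A B hA hB
    simpa using hA.mul hB
  have ht : ∀ (i j : Fin 4) (hij : i ≠ j) (a : ℝ), Joined 1 (Matrix.SpecialLinearGroup.transvection hij a) := by
    intro i j hij a
    refine ⟨⟨⟨fun t => Matrix.SpecialLinearGroup.transvection hij ((t : ℝ) * a), ?_⟩, ?_, ?_⟩⟩
    · refine Continuous.subtype_mk (f := fun t : unitInterval => Matrix.transvection i j ((t : ℝ) * a)) ?_ _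
      unfold Matrix.transvection
      refine continuous_const.add ?_
      refine continuous_matrix ?_
      intro x y
      simp only [Matrix.single_apply]
      split_ifs <;> fun_prop
    · simp [transvection_coeff_zero]
    · simp
  refine diagonal_transvection_induction' (fun A => Joined 1 A) A ?_ ht hm
  intro i j hij c hc
  rw [diag2n_dec]
  refine hm _ _ (hm _ _ (hm _ _ (hm _ _ (hm _ _ ?_ ?_) ?_) ?_) ?_) ?_
  all_goals exact ht _ _ _ _

lemma sl_pos (f : Matrix (Fin 4) (Fin 4) ℝ → ℝ) (hf : Continuous f)
    (h0 : ∀ A, A.det = 1 → f A ≠ 0) (h1 : 0 < f 1) (A : Matrix (Fin 4) (Fin 4) ℝ) (hA : A.det = 1) :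
    0 < f A := by
  by_contra hn
  let B : Matrix.SpecialLinearGroup (Fin 4) ℝ := ⟨A, hA⟩
  have hB : Joined (1 : Matrix.SpecialLinearGroup (Fin 4) ℝ) B := sl_joined B
  let γ : Path (1 : Matrix.SpecialLinearGroup (Fin 4) ℝ) B := hB.somePath
  have hc : Continuous (fun t : unitInterval => f (γ t).1) := hf.comp (continuous_subtype_val.comp γ.continuous)
  have := mem_range_of_exists_le_of_exists_ge hc (c := 0) ⟨1, by simpa [B] using hn⟩ ⟨0, by simpa using h1.le⟩
  obtain ⟨t, ht⟩ := this
  exact h0 _ (γ t).2 ht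

lemma bilinR_comb {k : ℕ} (w : Fin k → Fin 6 → ℝ) (c c' : Fin k → ℝ) :
    bilinR G6 (∑ i, c i • w i) (∑ j, c' j • w j)
      = c ⬝ᵥ ((Matrix.of fun i j => bilinR G6 (w i) (w j)) *ᵥ c') := by
  simp only [bilinR, Matrix.mulVec_sum, dotProduct_sum, sum_dotProduct, smul_dotProduct, Matrix.mulVec_smul, dotProduct_smul]
  simp only [dotProduct, Matrix.mulVec, Matrix.of_apply, Finset.mul_sum, smul_eq_mul]
  rw [Finset.sum_comm]
  simp only [Finset.mul_sum, Finset.sum_mul]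
  refine Finset.sum_congr rfl fun i _ => Finset.sum_congr rfl fun j _ => ?_
  refine Finset.sum_congr rfl fun x _ => Finset.sum_congr rfl fun y _ => ?_
  ring

lemma bilinR_symm (x y : Fin 6 → ℝ) : bilinR G6 x y = bilinR G6 y x := by
  unfold bilinR
  rw [G6_map, Matrix.dotProduct_mulVec, ← Matrix.mulVec_transpose, G6G_tr, dotProduct_comm]

lemma bilinR_isom (g : Matrix (Fin 6) (Fin 6) ℝ) (hg : gᵀ * G6G ℝ * g = G6G ℝ) (x y : Fin 6 → ℝ) :
    bilinR G6 (g *ᵥ x) (g *ᵥ y) = bilinR G6 x y := by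
  unfold bilinR
  rw [G6_map]
  conv_rhs => rw [← hg]
  rw [← Matrix.vecMul_transpose, ← Matrix.dotProduct_mulVec, Matrix.mulVec_mulVec, Matrix.mulVec_mulVec, Matrix.mul_assoc]

/-- an isometry never makes the projection determinant vanish -/
lemma proj_ne_zero {k : ℕ} (w : Fin k → Fin 6 → ℝ) (hw : IsMaxPosTuple G6 w)
    (g : Matrix (Fin 6) (Fin 6) ℝ) (hg : gᵀ * G6G ℝ * g = G6G ℝ) :
    (Matrix.of fun i j : Fin k => bilinR G6 (w i) (g *ᵥ w j)).det ≠ 0 := by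
  intro h0
  obtain ⟨c, hc, hc0⟩ := Matrix.exists_mulVec_eq_zero_iff.2 h0
  set v : Fin 6 → ℝ := ∑ j, c j • w j with hv
  have hort : ∀ i, bilinR G6 (w i) (g *ᵥ v) = 0 := by
    intro i
    have := congrFun hc0 i
    simp only [Matrix.mulVec, Matrix.of_apply, dotProduct, Pi.zero_apply] at this
    rw [← this, hv]
    simp only [bilinR, Matrix.mulVec_sum, dotProduct_sum, Matrix.mulVec_smul, dotProduct_smul, smul_eq_mul]
    refine Finset.sum_congr rfl fun j _ => ?_
    rw [mul_comm]
  have hpos : 0 < bilinR G6 (g *ᵥ v) (g *ᵥ v) := by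
    rw [bilinR_isom g hg, hv, bilinR_comb]
    have := hw.1.dotProduct_mulVec_pos hc
    simpa using this
  have hort' : ∀ i, bilinR G6 (g *ᵥ v) (w i) = 0 := fun i => by rw [bilinR_symm, hort]
  refine hw.2 (Fin.cons (g *ᵥ v) w) ?_
  refine Matrix.PosDef.of_dotProduct_mulVec_pos ?_ ?_
  · ext i j
    simp [bilinR_symm]
  · intro x hx
    have e : star x ⬝ᵥ ((Matrix.of fun i j => bilinR G6 ((Fin.cons (g *ᵥ v) w : Fin (k+1) → Fin 6 → ℝ) i) ((Fin.cons (g *ᵥ v) w : Fin (k+1) → Fin 6 → ℝ) j)) *ᵥ x)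
       = x 0 * x 0 * bilinR G6 (g *ᵥ v) (g *ᵥ v) +
        star (fun i => x (Fin.succ i)) ⬝ᵥ ((Matrix.of fun i j => bilinR G6 (w i) (w j)) *ᵥ (fun i => x (Fin.succ i))) := by
      simp only [dotProduct, Matrix.mulVec, Fin.sum_univ_succ, Matrix.of_apply, Fin.cons_zero, Fin.cons_succ, hort, hort']
      simp
      ring
    rw [e]
    by_cases hx0 : (fun i => x (Fin.succ i)) = 0
    · have : x 0 ≠ 0 := by
        intro h
        apply hx
        funext i
        refine Fin.cases h (fun i => congrFun hx0 i) i
      rw [hx0]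
      have h2 : 0 < x 0 * x 0 := by
        have := mul_self_pos.2 this
        exact this
      simp
      positivity
    · have h1 := hw.1.dotProduct_mulVec_pos hx0
      have h2 : 0 ≤ x 0 * x 0 := mul_self_nonneg _
      have h3 := mul_nonneg h2 hpos.le
      linarith

lemma lam2G_cont : Continuous (fun A : Matrix (Fin 4) (Fin 4) ℝ => lam2G A) := by
  refine continuous_matrix fun i j => ?_
  simp only [lam2G, Matrix.of_apply]
  fun_prop

lemma lam2_orient (ψ : Matrix (Fin 4) (Fin 4) ℤ) (hψ : ψ.det = 1) : OrientPres G6 (lam2 ψ) := by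
  intro k w hw
  rw [lam2_map]
  refine sl_pos (fun A => (Matrix.of fun i j : Fin k => bilinR G6 (w i) (lam2G A *ᵥ w j)).det) ?_ ?_ ?_ _ ?_
  · refine Continuous.matrix_det (continuous_matrix fun i j => ?_)
    simp only [Matrix.of_apply, bilinR]
    exact Continuous.dotProduct continuous_const (Continuous.matrix_mulVec continuous_const (lam2G_cont.matrix_mulVec continuous_const))
  · intro A hA
    refine proj_ne_zero w hw _ ?_
    rw [lam2G_isom, hA, one_smul]
  · simp only [lam2G_one, Matrix.one_mulVec]
    exact hw.1.det_pos
  · have := (Int.castRingHom ℝ).map_det ψ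
    simp [hψ] at this
    exact this.symm

lemma lam2_det (ψ : Matrix (Fin 4) (Fin 4) ℤ) (hψ : ψ.det = 1) : (lam2 ψ).det = 1 := by
  have h1 : (lam2 ψ).det * (lam2 ψ).det = 1 := by
    have := congrArg Matrix.det (lam2G_isom ψ)
    rw [hψ, one_smul, Matrix.det_mul, Matrix.det_mul, Matrix.det_transpose] at this
    have h2 := congrArg Matrix.det (G6G_sq (R := ℤ))
    rw [Matrix.det_mul, Matrix.det_one] at h2
    rw [lam2_eq]
    calc _ = ((lam2G ψ).det * (G6G ℤ).det * (lam2G ψ).det) * (G6G ℤ).det := by linear_combination (-(lam2G ψ).det * (lam2G ψ).det) * h2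
      _ = 1 := by rw [this, h2]
  have h3 : (0 : ℝ) < (lam2G (ψ.map (Int.cast : ℤ → ℝ))).det := by
    refine sl_pos (fun A => (lam2G A).det) lam2G_cont.matrix_det ?_ ?_ _ ?_
    · intro A hA h0
      have := congrArg Matrix.det (lam2G_isom A)
      rw [hA, one_smul, Matrix.det_mul, h0] at this
      have h2 := congrArg Matrix.det (G6G_sq (R := ℝ))
      rw [Matrix.det_mul, Matrix.det_one, ← this] at h2
      simp at h2
    · simp [lam2G_one]
    · have := (Int.castRingHom ℝ).map_det ψ
      simp [hψ] at this
      exact this.symm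
  rw [← lam2_map] at h3
  have h4 := (Int.castRingHom ℝ).map_det (lam2 ψ)
  have h5 : (0 : ℝ) < (((lam2 ψ).det : ℤ) : ℝ) := by
    have : (((lam2 ψ).det : ℤ) : ℝ) = ((lam2 ψ).map (Int.cast : ℤ → ℝ)).det := h4
    rw [this]; exact h3
  have h6 : 0 < (lam2 ψ).det := by exact_mod_cast h5
  nlinarith

lemma gcd2' (x y : ℤ) (h : x ≠ 0 ∨ y ≠ 0) :
    ∃ g c₁ c₂ m₁ m₂ : ℤ, g ≠ 0 ∧ x = g * c₁ ∧ y = g * c₂ ∧ m₁ * c₁ + m₂ * c₂ = 1 := by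
  obtain ⟨c₁, h1⟩ := Int.gcd_dvd_left x y
  obtain ⟨c₂, h2⟩ := Int.gcd_dvd_right x y
  have h3 := Int.gcd_eq_gcd_ab x y
  have h0 : (Int.gcd x y : ℤ) ≠ 0 := by
    intro h0
    have := Int.gcd_eq_zero_iff.1 (by exact_mod_cast h0)
    omega
  refine ⟨Int.gcd x y, c₁, c₂, Int.gcdA x y, Int.gcdB x y, h0, h1, h2, ?_⟩
  apply mul_left_cancel₀ h0
  generalize (Int.gcd x y : ℤ) = G at *
  generalize Int.gcdA x y = A at *
  generalize Int.gcdB x y = B at *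
  linear_combination -h3 - A * h1 - B * h2

lemma gcd3' (x y z : ℤ) (h : x ≠ 0 ∨ y ≠ 0 ∨ z ≠ 0) :
    ∃ a b₁ b₂ b₃ m₁ m₂ m₃ : ℤ, a ≠ 0 ∧ x = a * b₁ ∧ y = a * b₂ ∧ z = a * b₃ ∧
      m₁ * b₁ + m₂ * b₂ + m₃ * b₃ = 1 := by
  by_cases hxy : x ≠ 0 ∨ y ≠ 0
  · obtain ⟨g, c₁, c₂, m₁, m₂, hg, hx, hy, hm⟩ := gcd2' x y hxy
    obtain ⟨a, d₁, d₂, n₁, n₂, ha, hg', hz, hn⟩ := gcd2' g z (Or.inl hg)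
    refine ⟨a, d₁ * c₁, d₁ * c₂, d₂, n₁ * m₁, n₁ * m₂, n₂, ha, ?_, ?_, hz, ?_⟩
    · rw [hx, hg']; ring
    · rw [hy, hg']; ring
    · linear_combination hn + n₁ * d₁ * hm
  · push Not at hxy
    obtain ⟨rfl, rfl⟩ := hxy
    exact ⟨z, 0, 0, 1, 0, 0, 1, by simpa using h, by simp, by simp, by simp, by simp⟩

lemma plucker_aux (p0 p1 p2 p3 p4 p5 : ℤ) (h : p0 * p5 - p1 * p4 + p2 * p3 = 0) :
    ∃ a b₁ b₂ b₃ m₁ m₂ m₃ : ℤ, p0 = a * b₁ ∧ p1 = a * b₂ ∧ p2 = a * b₃ ∧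
      m₁ * b₁ + m₂ * b₂ + m₃ * b₃ = 1 ∧ p5 * b₁ - p4 * b₂ + p3 * b₃ = 0 := by
  by_cases h0 : p0 ≠ 0 ∨ p1 ≠ 0 ∨ p2 ≠ 0
  · obtain ⟨a, b₁, b₂, b₃, m₁, m₂, m₃, ha, h1, h2, h3, hm⟩ := gcd3' _ _ _ h0
    refine ⟨a, b₁, b₂, b₃, m₁, m₂, m₃, h1, h2, h3, hm, ?_⟩
    apply mul_left_cancel₀ ha
    linear_combination h - p5 * h1 + p4 * h2 - p3 * h3
  · push Not at h0
    obtain ⟨rfl, rfl, rfl⟩ := h0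
    by_cases h5 : p5 ≠ 0 ∨ p4 ≠ 0
    · obtain ⟨g, c₁, c₂, m₁, m₂, hg, hx, hy, hm⟩ := gcd2' _ _ h5
      refine ⟨0, c₂, c₁, 0, m₂, m₁, 0, by simp, by simp, by simp, by linarith, ?_⟩
      rw [hx, hy]; ring
    · push Not at h5
      obtain ⟨rfl, rfl⟩ := h5
      exact ⟨0, 1, 0, 0, 1, 0, 0, by simp, by simp, by simp, by simp, by simp⟩

lemma plucker (p : Fin 6 → ℤ) (h : p 0 * p 5 - p 1 * p 4 + p 2 * p 3 = 0) :
    ∃ α β : Fin 4 → ℤ, p = wedge α β := by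
  obtain ⟨a, b₁, b₂, b₃, m₁, m₂, m₃, h1, h2, h3, hm, hn⟩ := plucker_aux _ _ _ _ _ _ h
  refine ⟨![a, m₂ * p 3 + m₃ * p 4, m₃ * p 5 - m₁ * p 3, - m₁ * p 4 - m₂ * p 5], ![0, b₁, b₂, b₃], ?_⟩
  ext i
  fin_cases i <;> simp [wedge]
  · linear_combination h1
  · linear_combination h2
  · linear_combination h3
  · linear_combination - p 3 * hm + m₃ * hn
  · linear_combination - p 4 * hm - m₂ * hn
  · linear_combination - p 5 * hm + m₁ * hn

lemma rank_one (a b c d : ℤ) (h : a * d = b * c) :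
    ∃ u₁ u₂ v₁ v₂ : ℤ, a = u₁ * v₁ ∧ b = u₁ * v₂ ∧ c = u₂ * v₁ ∧ d = u₂ * v₂ := by
  by_cases h0 : a ≠ 0 ∨ b ≠ 0
  · obtain ⟨g, c₁, c₂, m₁, m₂, hg, hx, hy, hm⟩ := gcd2' _ _ h0
    have : c₁ * d = c₂ * c := by
      apply mul_left_cancel₀ hg
      linear_combination h - d * hx + c * hy
    refine ⟨g, m₁ * c + m₂ * d, c₁, c₂, hx, hy, ?_, ?_⟩
    · linear_combination -c * hm - m₂ * this
    · linear_combination -d * hm + m₁ * this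
  · push Not at h0
    obtain ⟨rfl, rfl⟩ := h0
    exact ⟨0, 1, c, d, by simp, by simp, by simp, by simp⟩

lemma isom_entries (g : Matrix (Fin 6) (Fin 6) ℤ) (hg : IsIsometry G6 g) (I J : Fin 6) :
    g 5 I * g 0 J - g 4 I * g 1 J + g 3 I * g 2 J
     + g 2 I * g 3 J - g 1 I * g 4 J + g 0 I * g 5 J = G6 I J := by
  rw [← (show gᵀ * G6 * g = G6 from hg)]
  simp only [Matrix.mul_apply, Fin.sum_univ_six, Matrix.transpose_apply]
  simp [G6]
  ring

lemma isom_mul (g g' : Matrix (Fin 6) (Fin 6) ℤ) (hg : IsIsometry G6 g) (hg' : IsIsometry G6 g') :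
    IsIsometry G6 (g * g') := by
  unfold IsIsometry at *
  calc (g * g')ᵀ * G6 * (g * g') = g'ᵀ * (gᵀ * G6 * g) * g' := by
        simp only [Matrix.transpose_mul, Matrix.mul_assoc]
    _ = G6 := by rw [hg, hg']

lemma lam2_isIsom (ψ : Matrix (Fin 4) (Fin 4) ℤ) (hψ : ψ.det = 1) : IsIsometry G6 (lam2 ψ) := by
  have := lam2G_isom ψ
  rw [hψ, one_smul] at this
  exact this

lemma stepA (g : Matrix (Fin 6) (Fin 6) ℤ) (hg : IsIsometry G6 g) :
    ∃ ψ : Matrix (Fin 4) (Fin 4) ℤ, ψ.det = 1 ∧ ∀ i, lam2 ψ i 0 = g i 0 ∧ lam2 ψ i 5 = g i 5 := by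
  have H := isom_entries g hg
  obtain ⟨α, β, hp⟩ := plucker (fun i => g i 0) (by
    have := H 0 0
    simp [G6] at this
    linarith)
  obtain ⟨γ, δ, hq⟩ := plucker (fun i => g i 5) (by
    have := H 5 5
    simp [G6] at this
    linarith)
  have e : ∀ i, lam2 (Matrix.of fun i j => ![α, β, γ, δ] j i) i 0 = g i 0 ∧ lam2 (Matrix.of fun i j => ![α, β, γ, δ] j i) i 5 = g i 5 := by
    intro i
    rw [show g i 0 = _ from congrFun hp i, show g i 5 = _ from congrFun hq i]
    fin_cases i <;> simp [lam2, wedge, pfst, psnd] <;> constructor <;> ring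
  refine ⟨Matrix.of fun i j => ![α, β, γ, δ] j i, ?_, e⟩
  have h1 := congrFun (congrFun (lam2G_isom (Matrix.of fun i j => ![α, β, γ, δ] j i)) 0) 5
  rw [← lam2_eq, ← G6_eq] at h1
  have h2 := congrFun (congrFun (show gᵀ * G6 * g = G6 from hg) 0) 5
  simp only [Matrix.mul_apply, Fin.sum_univ_six, Matrix.transpose_apply, e] at h1
  simp only [Matrix.mul_apply, Fin.sum_univ_six, Matrix.transpose_apply] at h2
  rw [h2] at h1
  simpa [G6] using h1.symm

lemma stepB (g : Matrix (Fin 6) (Fin 6) ℤ) (hg : IsIsometry G6 g)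
    (h0 : ∀ i, g i 0 = (1 : Matrix (Fin 6) (Fin 6) ℤ) i 0) (h5 : ∀ i, g i 5 = (1 : Matrix (Fin 6) (Fin 6) ℤ) i 5) :
    ∃ ψ : Matrix (Fin 4) (Fin 4) ℤ, ψ.det = 1 ∧ ∀ i, lam2 ψ i 0 = g i 0 ∧ lam2 ψ i 5 = g i 5
     ∧ lam2 ψ i 1 = g i 1 ∧ lam2 ψ i 4 = g i 4 := by
  have H := isom_entries g hg
  have h51 := H 0 1
  have h01 := H 5 1
  have h54 := H 0 4
  have h04 := H 5 4
  have h11 := H 1 1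
  have h44 := H 4 4
  have h14 := H 1 4
  simp [h0, h5, G6, Matrix.one_apply] at h51 h01 h54 h04 
  simp [G6, h51, h01, h54, h04] at h11 h44 h14
  obtain ⟨u1, u2, v1, v2, ha, hb, hc, hd⟩ := rank_one (g 1 1) (g 2 1) (g 3 1) (g 4 1) (by linarith)
  obtain ⟨s1, s2, t1, t2, ha', hb', hc', hd'⟩ := rank_one (g 1 4) (g 2 4) (g 3 4) (g 4 4) (by linarith)
  have hdet : (u1 * s2 - u2 * s1) * (v1 * t2 - v2 * t1) = 1 := by
    rw [ha, hb, hc, hd, ha', hb', hc', hd'] at h14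
    linear_combination -h14
  have key : ∃ s1 s2 t1 t2 : ℤ, g 1 4 = s1 * t1 ∧ g 2 4 = s1 * t2 ∧ g 3 4 = s2 * t1 ∧ g 4 4 = s2 * t2 ∧
      u1 * s2 - u2 * s1 = 1 ∧ v1 * t2 - v2 * t1 = 1 := by
    rcases Int.mul_eq_one_iff_eq_one_or_neg_one.1 hdet with ⟨h1, h2⟩ | ⟨h1, h2⟩
    · exact ⟨s1, s2, t1, t2, ha', hb', hc', hd', h1, h2⟩
    · exact ⟨-s1, -s2, -t1, -t2, by linarith, by linarith, by linarith, by linarith, by linarith, by linarith⟩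
  clear ha' hb' hc' hd' hdet
  obtain ⟨s1, s2, t1, t2, ha', hb', hc', hd', hd1, hd2⟩ := key
  refine ⟨!![u1, s1, 0, 0; u2, s2, 0, 0; 0, 0, v1, t1; 0, 0, v2, t2], ?_, ?_⟩
  · rw [Matrix.det_succ_row_zero]
    simp only [Fin.sum_univ_four, Matrix.det_fin_three]
    simp [Fin.succAbove, Fin.lt_def]
    linear_combination hd1 + (u1 * s2 - u2 * s1) * hd2
  · intro i
    rw [h0, h5]
    fin_cases i <;> simp [lam2, pfst, psnd, h51, h01, h54, h04, Matrix.one_apply, *] <;> linarith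

def eps0 : Matrix (Fin 6) (Fin 6) ℤ := Matrix.diagonal ![1, 1, -1, -1, 1, 1]

lemma stepC (g : Matrix (Fin 6) (Fin 6) ℤ) (hg : IsIsometry G6 g) (hdet : g.det = 1)
    (h0 : ∀ i, g i 0 = (1 : Matrix (Fin 6) (Fin 6) ℤ) i 0) (h5 : ∀ i, g i 5 = (1 : Matrix (Fin 6) (Fin 6) ℤ) i 5)
    (h1 : ∀ i, g i 1 = (1 : Matrix (Fin 6) (Fin 6) ℤ) i 1) (h4 : ∀ i, g i 4 = (1 : Matrix (Fin 6) (Fin 6) ℤ) i 4) :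
    g = 1 ∨ g = eps0 := by
  have H := isom_entries g hg
  have e52 := H 0 2
  have e02 := H 5 2
  have e12 := H 4 2
  have e42 := H 1 2
  have e53 := H 0 3
  have e03 := H 5 3
  have e13 := H 4 3
  have e43 := H 1 3
  have h22 := H 2 2
  have h23 := H 2 3
  have h33 := H 3 3
  simp [h0, h5, h1, h4, G6, Matrix.one_apply] at e52 e02 e12 e42 e53 e03 e13 e43
  simp [G6, e52, e02, e12, e42, e53, e03, e13, e43] at h22 h23 h33
  have hgm : g = !![1,0,0,0,0,0; 0,1,0,0,0,0; 0,0,g 2 2,g 2 3,0,0; 0,0,g 3 2,g 3 3,0,0; 0,0,0,0,1,0;0,0,0,0,0,1] := by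
    ext i j
    fin_cases j <;> fin_cases i <;> simp [h0, h1, h4, h5, Matrix.one_apply, e52, e02, e12, e42, e53, e03, e13, e43]
  have hdet' : g 2 2 * g 3 3 - g 2 3 * g 3 2 = 1 := by
    rw [hgm] at hdet
    rw [← hdet]
    simp [Matrix.det_succ_row_zero, Fin.sum_univ_succ, Fin.succAbove]
    try ring
  have hxw : g 2 2 * g 3 3 = 1 := by linarith
  rcases Int.mul_eq_one_iff_eq_one_or_neg_one.1 hxw with ⟨hx, hw⟩ | ⟨hx, hw⟩
  · left
    have hy : g 3 2 = 0 := by rw [hx] at h22; linarith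
    have hz : g 2 3 = 0 := by rw [hw] at h33; linarith
    rw [hgm, hx, hy, hz, hw]
    ext i j
    fin_cases i <;> fin_cases j <;> simp [Matrix.one_apply]
  · right
    have hy : g 3 2 = 0 := by rw [hx] at h22; linarith
    have hz : g 2 3 = 0 := by rw [hw] at h33; linarith
    rw [hgm, hx, hy, hz, hw]
    ext i j
    fin_cases i <;> fin_cases j <;> simp [eps0, Matrix.diagonal_apply]

lemma lam2_inv (ψ : Matrix (Fin 4) (Fin 4) ℤ) (hψ : ψ.det = 1) :
    ψ.adjugate.det = 1 ∧ lam2 ψ.adjugate * lam2 ψ = 1 ∧ lam2 ψ * lam2 ψ.adjugate = 1 := by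
  refine ⟨?_, ?_, ?_⟩
  · rw [Matrix.det_adjugate, hψ, one_pow]
  · rw [lam2_eq, lam2_eq, ← lam2G_mul, Matrix.adjugate_mul, hψ, one_smul, lam2G_one]
  · rw [lam2_eq, lam2_eq, ← lam2G_mul, Matrix.mul_adjugate, hψ, one_smul, lam2G_one]

lemma col_eq {A B C : Matrix (Fin 6) (Fin 6) ℤ} (h : C * A = 1) (j : Fin 6) (hj : ∀ i, A i j = B i j) (i : Fin 6) :
    (C * B) i j = (1 : Matrix (Fin 6) (Fin 6) ℤ) i j := by
  rw [← h]
  simp only [Matrix.mul_apply, hj]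

lemma surj (g : Matrix (Fin 6) (Fin 6) ℤ) (hg : IsIsometry G6 g) (hdet : g.det = 1) :
    ∃ ψ : Matrix (Fin 4) (Fin 4) ℤ, ψ.det = 1 ∧ (g = lam2 ψ ∨ g = lam2 ψ * eps0) := by
  obtain ⟨ψ, hψ, h1⟩ := stepA g hg
  obtain ⟨ha, hb, hc⟩ := lam2_inv ψ hψ
  have hg2 : IsIsometry G6 (lam2 ψ.adjugate * g) := isom_mul _ _ (lam2_isIsom _ ha) hg
  obtain ⟨φ, hφ, h2⟩ := stepB (lam2 ψ.adjugate * g) hg2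
    (col_eq hb 0 fun i => (h1 i).1) (col_eq hb 5 fun i => (h1 i).2)
  obtain ⟨ha', hb', hc'⟩ := lam2_inv φ hφ
  have hg3 : IsIsometry G6 (lam2 φ.adjugate * (lam2 ψ.adjugate * g)) := isom_mul _ _ (lam2_isIsom _ ha') hg2
  have h3 := stepC _ hg3 (by rw [Matrix.det_mul, Matrix.det_mul, lam2_det _ ha, lam2_det _ ha', hdet]; rfl)
    (col_eq hb' 0 fun i => (h2 i).1) (col_eq hb' 5 fun i => (h2 i).2.1)
    (col_eq hb' 1 fun i => (h2 i).2.2.1) (col_eq hb' 4 fun i => (h2 i).2.2.2)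
  have h4 : g = lam2 (ψ * φ) * (lam2 φ.adjugate * (lam2 ψ.adjugate * g)) := by
    have : lam2 (ψ * φ) = lam2 ψ * lam2 φ := lam2G_mul _ _
    rw [this, Matrix.mul_assoc, ← Matrix.mul_assoc (lam2 φ), hc', Matrix.one_mul, ← Matrix.mul_assoc, hc, Matrix.one_mul]
  refine ⟨ψ * φ, by rw [Matrix.det_mul, hψ, hφ]; rfl, ?_⟩
  rcases h3 with h3 | h3
  · left; rw [h3, Matrix.mul_one] at h4; exact h4
  · right; rw [h3] at h4; exact h4

noncomputable def w0 : Fin 3 → Fin 6 → ℝ :=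
  ![![1,0,0,0,0,1], ![0,1,0,0,-1,0], ![0,0,1,1,0,0]]

lemma bilinR_expand (x y : Fin 6 → ℝ) : bilinR G6 x y =
    x 0 * y 5 - x 1 * y 4 + x 2 * y 3 + x 3 * y 2 - x 4 * y 1 + x 5 * y 0 := by
  unfold bilinR
  rw [G6_map]
  simp [dotProduct, Matrix.mulVec, Fin.sum_univ_six, G6G]
  ring

lemma w0_max : IsMaxPosTuple G6 w0 := by
  constructor
  · have : (Matrix.of fun i j => bilinR G6 (w0 i) (w0 j)) = Matrix.diagonal (fun _ => (2 : ℝ)) := by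
      ext i j
      fin_cases i <;> fin_cases j <;> simp [bilinR_expand, w0] <;> norm_num
    rw [this]
    exact Matrix.PosDef.diagonal (fun _ => by norm_num)
  · intro w' hw'
    let N : Matrix (Fin 4) (Fin 4) ℝ := Matrix.of fun i j =>
      ![w' j 0 + w' j 5, w' j 1 - w' j 4, w' j 2 + w' j 3, 0] i
    have hN : N.det = 0 := Matrix.det_eq_zero_of_row_eq_zero 3 (by intro j; simp [N])
    obtain ⟨c, hc, hc0⟩ := Matrix.exists_mulVec_eq_zero_iff.2 hN
    have hpos := hw'.dotProduct_mulVec_pos hc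
    have e : star c = c := by simp
    rw [e, ← bilinR_comb, bilinR_expand] at hpos
    have a0 := congrFun hc0 0
    have a1 := congrFun hc0 1
    have a2 := congrFun hc0 2
    simp [N, Matrix.mulVec, dotProduct, Fin.sum_univ_four] at a0 a1 a2
    set v := ∑ i, c i • w' i with hv
    have vi : ∀ k, v k = c 0 * w' 0 k + c 1 * w' 1 k + c 2 * w' 2 k + c 3 * w' 3 k := by
      intro k; simp [hv, Fin.sum_univ_four]
    have b0 : v 5 = - v 0 := by rw [vi, vi]; linarith
    have b1 : v 4 = v 1 := by rw [vi, vi]; linarith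
    have b2 : v 3 = - v 2 := by rw [vi, vi]; linarith
    rw [b0, b1, b2] at hpos
    nlinarith [sq_nonneg (v 0), sq_nonneg (v 1), sq_nonneg (v 2)]

lemma eps0_not (ψ : Matrix (Fin 4) (Fin 4) ℤ) (hψ : ψ.det = 1) : ¬ OrientPres G6 (lam2 ψ * eps0) := by
  intro h
  have h1 := h 3 w0 w0_max
  have h2 := lam2_orient ψ hψ 3 w0 w0_max
  have hm : (lam2 ψ * eps0).map (Int.cast : ℤ → ℝ) = (lam2 ψ).map Int.cast * eps0.map Int.cast := by
    exact Matrix.map_mul (f := Int.castRingHom ℝ)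
  have e0 : eps0.map (Int.cast : ℤ → ℝ) *ᵥ w0 0 = w0 0 := by
    ext i; fin_cases i <;> simp [eps0, w0, Matrix.mulVec, dotProduct, Fin.sum_univ_six, Matrix.diagonal_apply]
  have e1 : eps0.map (Int.cast : ℤ → ℝ) *ᵥ w0 1 = w0 1 := by
    ext i; fin_cases i <;> simp [eps0, w0, Matrix.mulVec, dotProduct, Fin.sum_univ_six, Matrix.diagonal_apply]
  have e2 : eps0.map (Int.cast : ℤ → ℝ) *ᵥ w0 2 = - w0 2 := by
    ext i; fin_cases i <;> simp [eps0, w0, Matrix.mulVec, dotProduct, Fin.sum_univ_six, Matrix.diagonal_apply]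
  have hneg : ∀ x y, bilinR G6 x (-y) = - bilinR G6 x y := by
    intro x y; simp [bilinR_expand]; ring
  rw [hm] at h1
  simp only [← Matrix.mulVec_mulVec] at h1
  rw [Matrix.det_fin_three] at h1 h2
  simp only [Matrix.of_apply, e0, e1, e2, Matrix.mulVec_neg, hneg] at h1 h2
  linarith

lemma Fh_lam2 (h : Fin 6 → ℤ) (ψ : Matrix (Fin 4) (Fin 4) ℤ) (β γ : Fin 4 → ℤ) :
    Fh h (ψ *ᵥ β) (ψ *ᵥ γ) = ((lam2 ψ)ᵀ *ᵥ (G6 *ᵥ h)) ⬝ᵥ wedge β γ := by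
  unfold Fh
  rw [wedge_mulVec, Matrix.mulVec_transpose, ← Matrix.dotProduct_mulVec, Matrix.dotProduct_mulVec, ← Matrix.mulVec_transpose,
    show G6ᵀ = G6 from G6G_tr]

lemma Fh_eq (h : Fin 6 → ℤ) (β γ : Fin 4 → ℤ) :
    Fh h β γ = (G6 *ᵥ h) ⬝ᵥ wedge β γ := by
  unfold Fh
  rw [Matrix.dotProduct_mulVec, ← Matrix.mulVec_transpose, show G6ᵀ = G6 from G6G_tr]

lemma wedge_ext (x y : Fin 6 → ℤ) (h : ∀ β γ, x ⬝ᵥ wedge β γ = y ⬝ᵥ wedge β γ) : x = y := by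
  have h01 := h ![1,0,0,0] ![0,1,0,0]
  have h02 := h ![1,0,0,0] ![0,0,1,0]
  have h03 := h ![1,0,0,0] ![0,0,0,1]
  have h12 := h ![0,1,0,0] ![0,0,1,0]
  have h13 := h ![0,1,0,0] ![0,0,0,1]
  have h23 := h ![0,0,1,0] ![0,0,0,1]
  simp [wedge, dotProduct, Fin.sum_univ_six] at h01 h02 h03 h12 h13 h23
  ext i
  fin_cases i <;> assumption

/-- Let `h ∈ Λ²ℤ⁴` be primitive with `b(h,h) = 2d > 0`. The image under the second exterior
power homomorphism `λ(ψ) = Λ²ψ` of the symplectic group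
`Sp(ℤ⁴, F_h)` equals the stabilizer `SO⁺_h(Λ²ℤ⁴, b)`. -/
theorem stmt_13 (h : Fin 6 → ℤ) (hprim : IsPrimitiveVec h) (d : ℤ) (hdpos : 0 < d)
    (hsq : h ⬝ᵥ (G6 *ᵥ h) = 2 * d) :
    {g : Matrix (Fin 6) (Fin 6) ℤ |
        ∃ ψ : Matrix (Fin 4) (Fin 4) ℤ, IsUnit ψ.det ∧
          (∀ β γ : Fin 4 → ℤ, Fh h (ψ *ᵥ β) (ψ *ᵥ γ) = Fh h β γ) ∧ g = lam2 ψ} =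
    {g : Matrix (Fin 6) (Fin 6) ℤ |
        IsIsometry G6 g ∧ g.det = 1 ∧ OrientPres G6 g ∧ g *ᵥ h = h} := by
  have hGG : G6 * G6 = 1 := G6G_sq
  ext g
  simp only [Set.mem_ofPred_eq]
  constructor
  · rintro ⟨ψ, hu, hF, rfl⟩
    have hLt : (lam2 ψ)ᵀ *ᵥ (G6 *ᵥ h) = G6 *ᵥ h := by
      apply wedge_ext
      intro β γ
      rw [← Fh_lam2, hF, Fh_eq]
    have hisoD : (lam2 ψ)ᵀ * G6 * lam2 ψ = ψ.det • G6 := lam2G_isom ψ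
    have hδ2 : ψ.det * ψ.det = 1 := by
      rcases Int.isUnit_iff.1 hu with h | h <;> rw [h] <;> rfl
    have hinv : (ψ.det • (G6 * (lam2 ψ)ᵀ * G6)) * lam2 ψ = 1 := by
      rw [Matrix.smul_mul, Matrix.mul_assoc, Matrix.mul_assoc, ← Matrix.mul_assoc (lam2 ψ)ᵀ, hisoD,
        Matrix.mul_smul, hGG, smul_smul, hδ2, one_smul]
    have hinv' := mul_eq_one_comm.1 hinv
    have hLh : lam2 ψ *ᵥ h = ψ.det • h := by
      have := congrArg (fun M => M *ᵥ h) hinv'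
      simp only [Matrix.mul_smul, Matrix.one_mulVec, Matrix.smul_mulVec, ← Matrix.mulVec_mulVec, hLt] at this
      rw [Matrix.mulVec_mulVec h G6 G6, hGG, Matrix.one_mulVec] at this
      calc lam2 ψ *ᵥ h = (ψ.det * ψ.det) • (lam2 ψ *ᵥ h) := by rw [hδ2, one_smul]
        _ = ψ.det • h := by rw [← smul_smul, this]
    have hdet : ψ.det = 1 := by
      rcases Int.isUnit_iff.1 hu with h' | h'
      · exact h'
      · exfalso
        have h2 : (lam2 ψ *ᵥ h) ⬝ᵥ (G6 *ᵥ h) = h ⬝ᵥ (G6 *ᵥ h) := by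
          conv_rhs => rw [← hLt]
          rw [Matrix.dotProduct_mulVec h, Matrix.vecMul_transpose]
        rw [hLh, h', smul_dotProduct, hsq, smul_eq_mul] at h2
        linarith
    refine ⟨lam2_isIsom ψ hdet, lam2_det ψ hdet, lam2_orient ψ hdet, ?_⟩
    rw [hLh, hdet, one_smul]
  · rintro ⟨hiso, hdet, hor, hgh⟩
    obtain ⟨ψ, hψ, rfl | rfl⟩ := surj g hiso hdet
    · refine ⟨ψ, by rw [hψ]; exact isUnit_one, ?_, rfl⟩
      intro β γ
      rw [Fh_lam2, Fh_eq]
      congr 1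
      conv_lhs => rw [← hgh]
      rw [Matrix.mulVec_mulVec, Matrix.mulVec_mulVec, show (lam2 ψ)ᵀ * G6 * lam2 ψ = G6 from hiso]
    · exact absurd hor (eps0_not ψ hψ)
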